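/- Let r, s ∈ ℤ with r ≤ s, and let Q denote the finite quotient 𝔬-module ϖ^r𝔬ⁿ / 2ϖ^s𝔬ⁿ. Then the ℂ-vector space of odd functions {f : Q → ℂ : f(−x) = −f(x) for all x ∈ Q} has dimension (1/2)·q^{en}·(q^{(s−r)n} − 1). -/

import Mathlib

/-- The fractional ideal `ϖ^m𝔬 = {x ∈ k : val(x) ≥ m}`, as an additive subgroup of `k`. -/
def valAddSubgroup {k : Type*} [Field k] (v : AddValuation k (WithTop ℤ)) (m : ℤ) :
    AddSubgroup k where
  carrier := {x : k | (m : WithTop ℤ) ≤ v x}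
  zero_mem' := by simp [v.map_zero]
  add_mem' := by
    intro a b ha hb
    exact le_trans (le_min ha hb) (v.map_add a b)
  neg_mem' := by
    intro a ha
    simpa [v.map_neg] using ha

/-- The lattice `ϖ^m𝔬ⁿ` inside `kⁿ`. -/
def valLattice {k : Type*} [Field k] (v : AddValuation k (WithTop ℤ)) (n : ℕ) (m : ℤ) :
    AddSubgroup (Fin n → k) :=
  AddSubgroup.pi Set.univ fun _ => valAddSubgroup v m

/-- The odd complex-valued functions on an additive group `Q`, as a `ℂ`-subspace of
`Q → ℂ`. -/
noncomputable def oddFns (Q : Type*) [AddCommGroup Q] : Submodule ℂ (Q → ℂ) where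
  carrier := {f : Q → ℂ | ∀ x : Q, f (-x) = -f x}
  zero_mem' := fun _ => by simp
  add_mem' := by
    intro f g hf hg x
    simp [hf x, hg x]; ring
  smul_mem' := by
    intro c f hf x
    simp [hf x]

theorem finrank_odd (Q : Type*) [AddCommGroup Q] [Finite Q] :
    2 * Module.finrank ℂ (oddFns Q) + Nat.card {x : Q // -x = x} = Nat.card Q := by
  classical
  have := Fintype.ofFinite Q
  let P : Matrix Q Q ℂ := (Equiv.neg Q).permMatrix ℂ
  let M : Matrix Q Q ℂ := (1/2 : ℂ) • (1 - P)
  have hM : ∀ f x, Matrix.toLin' M f x = (1/2 : ℂ) * (f x - f (-x)) := by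
    intro f x
    simp [M, P, Matrix.sub_mulVec, Matrix.permMatrix_mulVec, Matrix.smul_mulVec]
  have hp : LinearMap.IsProj (oddFns Q) (Matrix.toLin' M) := by
    refine ⟨fun f x => ?_, fun f hf => ?_⟩
    · rw [hM, hM, neg_neg]; ring
    · ext x
      have : f (-x) = - f x := hf x
      rw [hM, this]; ring
  have ht := hp.trace
  rw [Matrix.trace_toLin'_eq, Matrix.trace_smul, Matrix.trace_sub, Matrix.trace_permutation,
    Matrix.trace_one] at ht
  have hc : (Function.fixedPoints (Equiv.neg Q)).ncard = Nat.card {x : Q // -x = x} := rfl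
  rw [hc, smul_eq_mul, ← Nat.card_eq_fintype_card] at ht
  have : (2 * (Module.finrank ℂ (oddFns Q) : ℂ)) + Nat.card {x : Q // -x = x} = Nat.card Q := by
    rw [← ht]; ring
  exact_mod_cast this

theorem mem_vas {k : Type*} [Field k] (v : AddValuation k (WithTop ℤ)) (m : ℤ) (x : k) :
    x ∈ valAddSubgroup v m ↔ (m : WithTop ℤ) ≤ v x := Iff.rfl

theorem vas_mono {k : Type*} [Field k] (v : AddValuation k (WithTop ℤ)) {a b : ℤ} (h : a ≤ b) :
    valAddSubgroup v b ≤ valAddSubgroup v a := by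
  intro x hx
  rw [mem_vas] at *
  exact le_trans (by exact_mod_cast h) hx

theorem mem_vl {k : Type*} [Field k] (v : AddValuation k (WithTop ℤ)) (n : ℕ) (m : ℤ)
    (x : Fin n → k) :
    x ∈ valLattice v n m ↔ ∀ i, x i ∈ valAddSubgroup v m := by
  simp [valLattice, AddSubgroup.mem_pi]

theorem vl_mono {k : Type*} [Field k] (v : AddValuation k (WithTop ℤ)) (n : ℕ) {a b : ℤ}
    (h : a ≤ b) : valLattice v n b ≤ valLattice v n a := by
  intro x hx
  rw [mem_vl] at *
  exact fun i => vas_mono v h (hx i)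

theorem mul_mem_vas {k : Type*} [Field k] (v : AddValuation k (WithTop ℤ)) (c : k) (a m : ℤ)
    (hc : v c = (a : WithTop ℤ)) (x : k) :
    c * x ∈ valAddSubgroup v (a + m) ↔ x ∈ valAddSubgroup v m := by
  rw [mem_vas, mem_vas, v.map_mul, hc]
  generalize v x = y
  induction y using WithTop.recTopCoe with
  | top => simp
  | coe y =>
    rw [← WithTop.coe_add, WithTop.coe_le_coe, WithTop.coe_le_coe]
    exact add_le_add_iff_left a

theorem map_vas {k : Type*} [Field k] (v : AddValuation k (WithTop ℤ)) (c : k) (a m : ℤ)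
    (hc : v c = (a : WithTop ℤ)) :
    (valAddSubgroup v m).map (AddMonoidHom.mulLeft c) = valAddSubgroup v (a + m) := by
  have hc0 : c ≠ 0 := by
    rintro rfl
    simp at hc
  ext x
  constructor
  · rintro ⟨y, hy, rfl⟩
    exact (mul_mem_vas v c a m hc y).2 hy
  · intro hx
    refine ⟨c⁻¹ * x, ?_, by simp [hc0]⟩
    apply (mul_mem_vas v c a m hc _).1
    rwa [mul_inv_cancel_left₀ hc0]

theorem relIndex_vas {k : Type*} [Field k] (v : AddValuation k (WithTop ℤ))
    (hsurj : ∀ m : ℤ, ∃ x : k, v x = (m : WithTop ℤ)) (a : ℤ) (d : ℕ) :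
    (valAddSubgroup v (a + d)).relIndex (valAddSubgroup v a) =
      ((valAddSubgroup v 1).relIndex (valAddSubgroup v 0)) ^ d := by
  induction d with
  | zero => simp
  | succ d ih =>
    rw [← AddSubgroup.relIndex_mul_relIndex (valAddSubgroup v (a + (d + 1 : ℕ)))
      (valAddSubgroup v (a + d)) (valAddSubgroup v a) (vas_mono v (by push_cast; omega))
      (vas_mono v (by omega)), ih, pow_succ']
    congr 1
    obtain ⟨c, hc⟩ := hsurj (a + d)
    have hc0 : c ≠ 0 := by
      rintro rfl
      rw [v.map_zero] at hc
      exact WithTop.top_ne_coe hc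
    have h1 := map_vas v c _ 1 hc
    have h0 := map_vas v c _ 0 hc
    rw [add_zero] at h0
    rw [← h0, show a + ((d + 1 : ℕ) : ℤ) = a + d + 1 by push_cast; ring, ← h1]
    exact AddSubgroup.relIndex_map_map_of_injective _ _ (mul_right_injective₀ hc0)

theorem relIndex_vl {k : Type*} [Field k] (v : AddValuation k (WithTop ℤ)) (n : ℕ) (a b : ℤ) :
    (valLattice v n b).relIndex (valLattice v n a) =
      ((valAddSubgroup v b).relIndex (valAddSubgroup v a)) ^ n := by
  let B := (valAddSubgroup v b).addSubgroupOf (valAddSubgroup v a)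
  let φ : valLattice v n a →+ (Fin n → valAddSubgroup v a ⧸ B) :=
    { toFun := fun x i => QuotientAddGroup.mk ⟨x.1 i, (mem_vl v n a x.1).1 x.2 i⟩
      map_zero' := rfl
      map_add' := fun x y => rfl }
  have hker : φ.ker = (valLattice v n b).addSubgroupOf (valLattice v n a) := by
    ext x
    rw [AddMonoidHom.mem_ker, AddSubgroup.mem_addSubgroupOf, mem_vl, funext_iff]
    refine forall_congr' fun i => ?_
    exact QuotientAddGroup.eq_zero_iff _
  have hs : Function.Surjective φ := by
    intro y
    refine ⟨⟨fun i => ((y i).out : valAddSubgroup v a).1,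
      (mem_vl _ _ _ _).2 fun i => (y i).out.2⟩, ?_⟩
    funext i
    exact Quotient.out_eq' (y i)
  unfold AddSubgroup.relIndex
  rw [← hker, AddSubgroup.index_ker, AddMonoidHom.range_eq_top.2 hs, AddSubgroup.card_top,
    Nat.card_fun]
  simp [B, AddSubgroup.index]

/-- For `r ≤ s`, the space of odd functions on `Q = ϖ^r𝔬ⁿ / 2ϖ^s𝔬ⁿ` has
dimension `(1/2)·q^{en}·(q^{(s−r)n} − 1)` (stated with both sides multiplied by 2). -/
theorem dim_odd_functions {k : Type*} [Field k]
    (hchar : (2 : k) ≠ 0)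
    (v : AddValuation k (WithTop ℤ))
    (hsurj : ∀ m : ℤ, ∃ x : k, v x = (m : WithTop ℤ))
    (ϖ : k) (hϖ : v ϖ = (1 : ℤ))
    (e : ℤ) (he : v (2 : k) = (e : WithTop ℤ))
    (q : ℕ)
    (hres_fin : Finite
      (valAddSubgroup v 0 ⧸ (valAddSubgroup v 1).addSubgroupOf (valAddSubgroup v 0)))
    (hq : Nat.card
      (valAddSubgroup v 0 ⧸ (valAddSubgroup v 1).addSubgroupOf (valAddSubgroup v 0)) = q)
    (n : ℕ) (r s : ℤ) (hrs : r ≤ s) :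
    2 * Module.finrank ℂ
        (oddFns
          (valLattice v n r ⧸ (valLattice v n (e + s)).addSubgroupOf (valLattice v n r))) =
      q ^ (e * n).toNat * (q ^ ((s - r) * n).toNat - 1) := by
  have he0 : 0 ≤ e := by
    have h := v.map_add 1 1
    rw [one_add_one_eq_two, he, v.map_one, min_self] at h
    exact_mod_cast h
  have hq0 : q ≠ 0 := by rw [← hq]; exact Nat.card_pos.ne'
  have hq' : (valAddSubgroup v 1).relIndex (valAddSubgroup v 0) = q := hq
  have key : ∀ a b : ℤ, a ≤ b → (valLattice v n b).relIndex (valLattice v n a)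
      = q ^ ((b - a) * n).toNat := by
    intro a b hab
    obtain ⟨d, rfl⟩ := Int.le.dest hab
    rw [relIndex_vl, relIndex_vas v hsurj, hq', ← pow_mul]
    congr 1
    rw [add_sub_cancel_left]
    exact_mod_cast (Int.toNat_natCast (d * n)).symm
  set N := (valLattice v n (e + s)).addSubgroupOf (valLattice v n r) with hN
  have hcard : Nat.card (valLattice v n r ⧸ N) = q ^ ((e + s - r) * n).toNat :=
    key r (e + s) (by omega)
  have hfin : Finite (valLattice v n r ⧸ N) := by
    apply Nat.finite_of_card_ne_zero
    rw [hcard]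
    exact pow_ne_zero _ hq0
  let D : (valLattice v n r ⧸ N) →+ (valLattice v n r ⧸ N) := nsmulAddMonoidHom 2
  have hcm : D.ker.comap (QuotientAddGroup.mk' N) =
      (valLattice v n s).addSubgroupOf (valLattice v n r) := by
    ext x
    have : D (QuotientAddGroup.mk' N x) = QuotientAddGroup.mk' N (2 • x) := rfl
    rw [AddSubgroup.mem_comap, AddMonoidHom.mem_ker, this, QuotientAddGroup.mk'_apply,
      QuotientAddGroup.eq_zero_iff, hN, AddSubgroup.mem_addSubgroupOf,
      AddSubgroup.mem_addSubgroupOf, mem_vl, mem_vl]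
    refine forall_congr' fun i => ?_
    rw [← mul_mem_vas v 2 e s he]
    simp
  have hidx : D.ker.index = q ^ ((s - r) * n).toNat := by
    rw [← key r s hrs, ← AddSubgroup.index_comap_of_surjective _
      (QuotientAddGroup.mk'_surjective N), hcm]
    rfl
  have hmul := D.ker.index_mul_card
  have hexp : q ^ ((e + s - r) * n).toNat = q ^ ((s - r) * n).toNat * q ^ (e * n).toNat := by
    rw [← pow_add, ← Int.toNat_add (mul_nonneg (by omega) (by omega))
      (mul_nonneg he0 (by omega))]
    congr 2
    ring
  rw [hidx, hcard, hexp] at hmul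
  have hkc : Nat.card D.ker = q ^ (e * n).toNat :=
    Nat.eq_of_mul_eq_mul_left (Nat.pos_of_ne_zero (pow_ne_zero _ hq0)) hmul
  have hfix : Nat.card {x : valLattice v n r ⧸ N // -x = x} = Nat.card D.ker := by
    apply Nat.card_congr
    refine Equiv.subtypeEquivRight fun x => ?_
    rw [AddMonoidHom.mem_ker]
    change -x = x ↔ 2 • x = 0
    rw [two_nsmul, neg_eq_iff_add_eq_zero]
  have hmain := finrank_odd (valLattice v n r ⧸ N)
  rw [hfix, hkc, hcard, hexp] at hmain
  rw [Nat.mul_sub, mul_one, mul_comm (q ^ (e * n).toNat)]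
  omega
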